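/- arXiv:1909.11027 — 2 statements merged into one kernel-verified Lean document; each statement's English description precedes it below -/
import Mathlib

section
/- Let n ≥ 2 be an integer and let S be a set of 4-permutations whose cover matrix C is constant (all sixteen entries of C are equal). Then the gradient ∇h_{S,n}(0,…,0) = (∂h_{S,n}/∂x_{ij}(0,…,0))_{i,j∈[n−1]} is the zero vector. -/
open MeasureTheory Filter

noncomputable section

/-- A permuton: a Borel probability measure on `ℝ × ℝ` (supported on `[0,1]²`)
with uniform marginals. -/
def IsPermuton (μ : Measure (ℝ × ℝ)) : Prop :=
  IsProbabilityMeasure μ ∧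
    (∀ x x' : ℝ, 0 ≤ x → x ≤ x' → x' ≤ 1 →
      μ (Set.Icc x x' ×ˢ Set.Icc (0 : ℝ) 1) = ENNReal.ofReal (x' - x)) ∧
    (∀ y y' : ℝ, 0 ≤ y → y ≤ y' → y' ≤ 1 →
      μ (Set.Icc (0 : ℝ) 1 ×ˢ Set.Icc y y') = ENNReal.ofReal (y' - y))

/-- The uniform permuton: two-dimensional Lebesgue measure on `[0,1]²`. -/
def uniformPermuton : Measure (ℝ × ℝ) :=
  volume.restrict (Set.Icc (0 : ℝ) 1 ×ˢ Set.Icc (0 : ℝ) 1)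

/-- The support of a Borel measure: all points each of whose open neighbourhoods has
positive measure. -/
def measSupport (μ : Measure (ℝ × ℝ)) : Set (ℝ × ℝ) :=
  {p | ∀ U : Set (ℝ × ℝ), IsOpen U → p ∈ U → 0 < μ U}

/-- The pattern density of a `k`-permutation `π` in a measure `μ` on `ℝ × ℝ`:
the `μ^{⊗ k}`-probability that `k` sampled points, relabelled so that their
`x`-coordinates increase, have `y`-coordinates ordered according to `π`. -/
def PermutonDensity {k : ℕ} (π : Equiv.Perm (Fin k)) (μ : Measure (ℝ × ℝ)) : ℝ :=
  ((Measure.pi fun _ : Fin k => μ)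
    {p : Fin k → ℝ × ℝ | ∃ σ : Equiv.Perm (Fin k),
      StrictMono (fun i => (p (σ i)).1) ∧
        ∀ i j : Fin k, (p (σ i)).2 < (p (σ j)).2 ↔ π i < π j}).toReal

open scoped Classical in
/-- The pattern density of a `k`-permutation `π` in an `n`-permutation `Π`:
the proportion of `k`-element subsets of `Fin n` on which `Π` induces the pattern `π`
(zero when `n < k`). -/
def PatternDensity {k n : ℕ} (π : Equiv.Perm (Fin k)) (Perm : Equiv.Perm (Fin n)) : ℝ :=
  ((Finset.univ.filter fun A : Finset (Fin n) =>
      ∃ h : A.card = k, ∀ i j : Fin k,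
        Perm ↑(A.orderIsoOfFin h i) < Perm ↑(A.orderIsoOfFin h j) ↔ π i < π j).card : ℝ) /
    (n.choose k)

/-- A sequence of permutations (of varying orders) is quasirandom if the density of every
pattern `π` converges to `1/|π|!`. -/
def Quasirandom (P : ℕ → (n : ℕ) × Equiv.Perm (Fin n)) : Prop :=
  ∀ (k : ℕ) (π : Equiv.Perm (Fin k)),
    Tendsto (fun i => PatternDensity π (P i).2) atTop (nhds (1 / (Nat.factorial k : ℝ)))

/-- A set `S` of `k`-permutations is `Σ`-forcing if a sequence of permutations is quasirandom
exactly when the sum of the densities of the patterns from `S` converges to `|S|/k!`. -/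
def SigmaForcing {k : ℕ} (S : Finset (Equiv.Perm (Fin k))) : Prop :=
  ∀ P : ℕ → (n : ℕ) × Equiv.Perm (Fin n),
    Quasirandom P ↔
      Tendsto (fun i => ∑ π ∈ S, PatternDensity π (P i).2) atTop
        (nhds ((S.card : ℝ) / (Nat.factorial k : ℝ)))

/-- The `4`-permutation written in one-line notation as `(a+1)(b+1)(c+1)(d+1)`
(inputs are 0-indexed). -/
def mk4 (a b c d : Fin 4) (h : Function.Bijective ![a, b, c, d] := by decide) :
    Equiv.Perm (Fin 4) :=
  Equiv.ofBijective _ h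

/-- A doubly stochastic matrix: non-negative entries, all row and column sums equal to one. -/
def IsDoublyStochastic {n : ℕ} (A : Matrix (Fin n) (Fin n) ℝ) : Prop :=
  (∀ i j, 0 ≤ A i j) ∧ (∀ i, ∑ j, A i j = 1) ∧ (∀ j, ∑ i, A i j = 1)

/-- The step permuton `μ[A]` associated with an `n × n` doubly stochastic matrix `A`. -/
def stepPermuton {n : ℕ} (A : Matrix (Fin n) (Fin n) ℝ) : Measure (ℝ × ℝ) :=
  ∑ i : Fin n, ∑ j : Fin n,
    ENNReal.ofReal (A i j * n) •
      volume.restrict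
        (Set.Ico ((i : ℝ) / n) (((i : ℝ) + 1) / n) ×ˢ
          Set.Ico ((j : ℝ) / n) (((j : ℝ) + 1) / n))

/-- The matrix `B^{ij}` (0-indexed: `p, q ∈ [n-1]`): `+1` at positions `(p,q)` and
`(p+1,q+1)`, `-1` at positions `(p,q+1)` and `(p+1,q)`, `0` elsewhere. -/
def Bmat (n : ℕ) (p q : Fin (n - 1)) : Matrix (Fin n) (Fin n) ℝ := fun a b =>
  (if (a : ℕ) = (p : ℕ) ∧ (b : ℕ) = (q : ℕ) then 1 else 0) +
    (if (a : ℕ) = (p : ℕ) + 1 ∧ (b : ℕ) = (q : ℕ) + 1 then 1 else 0) -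
    (if (a : ℕ) = (p : ℕ) ∧ (b : ℕ) = (q : ℕ) + 1 then 1 else 0) -
    (if (a : ℕ) = (p : ℕ) + 1 ∧ (b : ℕ) = (q : ℕ) then 1 else 0)

/-- The matrix `A + ∑_{i,j} x_{ij} B^{ij}` where `A` is the `n × n` matrix with all
entries `1/n`. -/
def pertMatrix (n : ℕ) (x : Fin (n - 1) × Fin (n - 1) → ℝ) : Matrix (Fin n) (Fin n) ℝ :=
  fun a b => 1 / n + ∑ p : Fin (n - 1) × Fin (n - 1), x p * Bmat n p.1 p.2 a b

/-- The function `h_{S,n}`: the sum over `π ∈ S` of the pattern density of `π` in the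
step permuton of the perturbed matrix. -/
def hSN (n : ℕ) (S : Finset (Equiv.Perm (Fin 4))) (x : Fin (n - 1) × Fin (n - 1) → ℝ) : ℝ :=
  ∑ π ∈ S, PermutonDensity π (stepPermuton (pertMatrix n x))

open scoped Classical in
/-- The cover matrix of a set `S` of `4`-permutations: `C i j` is the number of `π ∈ S`
with `π j = i`. -/
def coverMatrix (S : Finset (Equiv.Perm (Fin 4))) : Fin 4 → Fin 4 → ℕ := fun i j =>
  (S.filter fun π => π j = i).card

/-- The eight symmetry operations on `4`-permutations. -/
def symOps : List (Equiv.Perm (Fin 4) → Equiv.Perm (Fin 4)) :=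
  [fun σ => σ,
   fun σ => σ * Fin.revPerm,
   fun σ => Fin.revPerm * σ,
   fun σ => Fin.revPerm * σ * Fin.revPerm,
   fun σ => σ⁻¹,
   fun σ => σ⁻¹ * Fin.revPerm,
   fun σ => Fin.revPerm * σ⁻¹,
   fun σ => Fin.revPerm * σ⁻¹ * Fin.revPerm]

open scoped Classical in
/-- `T` is symmetric to `S` if one of the eight symmetry operations maps `S` onto `T`. -/
def SymmetricSets (S T : Finset (Equiv.Perm (Fin 4))) : Prop :=
  ∃ op ∈ symOps, T = S.image op

end

/-!
The densities of the perturbed permuton are integrals against a product measure, so the linear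
coefficient in the perturbation `g` is a sum over `m` of terms
`∫ (number of patterns in S formed by p) * g (p m)`. Permuting the `y`-coordinates of the points
`p i` with `i ≠ m` preserves the product measure and `p m`. Averaged over these permutations, the
number of patterns in `S` becomes an entry of the cover matrix divided by `(k - 1)!`: its position
in the matrix is given by the ranks of `p m` among the `x`- and the `y`-coordinates. If the cover
matrix is constant, the term is therefore a multiple of the mean of `g`, which vanishes.
-/

open scoped ENNReal

section Pattern

variable {k : ℕ}

/-- The event that `k` points form the pattern `π`, i.e. the event whose probability is
`PermutonDensity π`. -/
def patternEvent (π : Equiv.Perm (Fin k)) : Set (Fin k → ℝ × ℝ) :=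
  {p | ∃ σ : Equiv.Perm (Fin k), StrictMono (fun i => (p (σ i)).1) ∧
    ∀ i j : Fin k, (p (σ i)).2 < (p (σ j)).2 ↔ π i < π j}

/-- The number of patterns in `S` formed by `k` points; its expectation is the sum of the
densities of the patterns in `S`. -/
noncomputable def patternCount (S : Finset (Equiv.Perm (Fin k))) (p : Fin k → ℝ × ℝ) : ℝ :=
  ∑ π ∈ S, (patternEvent π).indicator 1 p

/-- The action of the symmetric group on `k`-tuples of points that permutes the
`y`-coordinates and keeps the `x`-coordinates. -/
def permuteSnd (τ : Equiv.Perm (Fin k)) (p : Fin k → ℝ × ℝ) : Fin k → ℝ × ℝ :=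
  fun i => ((p i).1, (p (τ i)).2)

lemma exists_strictMono_comp_perm {α : Type*} [LinearOrder α] {f : Fin k → α}
    (hf : Function.Injective f) : ∃ σ : Equiv.Perm (Fin k), StrictMono (f ∘ σ) :=
  ⟨Tuple.sort f, (Tuple.monotone_sort f).strictMono_of_injective
    (hf.comp (Tuple.sort f).injective)⟩

lemma perm_eq_of_strictMono_comp {α : Type*} [LinearOrder α] {f : Fin k → α}
    {σ τ : Equiv.Perm (Fin k)} (hσ : StrictMono (f ∘ σ)) (hτ : StrictMono (f ∘ τ)) : σ = τ := by
  have hf : Function.Injective f := (σ.injective_comp f).1 hσ.injective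
  exact Equiv.ext fun i => hf (congrFun (Tuple.unique_monotone hσ.monotone hτ.monotone) i)

lemma perm_eq_of_lt_iff_lt {σ π : Equiv.Perm (Fin k)} (h : ∀ i j, σ i < σ j ↔ π i < π j) :
    σ = π := by
  have hσ : StrictMono (π ∘ ⇑σ⁻¹) := fun i j hij => (h _ _).1 (by simpa using hij)
  have hπ : StrictMono (π ∘ ⇑π⁻¹) := fun i j hij => by simpa using hij
  exact inv_injective (perm_eq_of_strictMono_comp hσ hπ)

lemma permuteSnd_mem_patternEvent_iff {p : Fin k → ℝ × ℝ} {σ ρ : Equiv.Perm (Fin k)}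
    (hσ : StrictMono fun i => (p (σ i)).1) (hρ : StrictMono fun i => (p (ρ i)).2)
    (π τ : Equiv.Perm (Fin k)) :
    permuteSnd τ p ∈ patternEvent π ↔ τ = ρ * π * σ⁻¹ := by
  have snd_lt_iff (i j : Fin k) : (permuteSnd τ p (σ i)).2 < (permuteSnd τ p (σ j)).2 ↔
      (ρ⁻¹ * τ * σ) i < (ρ⁻¹ * τ * σ) j := by
    simp [permuteSnd, ← hρ.lt_iff_lt]
  constructor
  · rintro ⟨σ', hσ', hπ⟩
    obtain rfl : σ' = σ := perm_eq_of_strictMono_comp (f := fun i => (p i).1) hσ' hσ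
    have : ρ⁻¹ * τ * σ' = π := perm_eq_of_lt_iff_lt fun i j => (snd_lt_iff i j).symm.trans (hπ i j)
    rw [← this]
    group
  · rintro rfl
    refine ⟨σ, hσ, fun i j => (snd_lt_iff i j).trans ?_⟩
    simp [mul_assoc]

lemma sum_patternCount_permuteSnd {p : Fin k → ℝ × ℝ} {σ ρ : Equiv.Perm (Fin k)}
    (hσ : StrictMono fun i => (p (σ i)).1) (hρ : StrictMono fun i => (p (ρ i)).2)
    (S : Finset (Equiv.Perm (Fin k))) (m : Fin k) :
    ∑ τ with τ m = m, patternCount S (permuteSnd τ p) =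
      (S.filter fun π => π (σ⁻¹ m) = ρ⁻¹ m).card := by
  classical
  simp only [patternCount, Set.indicator_apply, permuteSnd_mem_patternEvent_iff hσ hρ,
    Pi.one_apply]
  rw [Finset.sum_comm, Finset.natCast_card_filter]
  simp only [Finset.sum_ite_eq', Finset.mem_filter, Finset.mem_univ, true_and,
    Equiv.Perm.mul_apply, Equiv.Perm.eq_inv_iff_eq]

lemma measurableSet_patternEvent (π : Equiv.Perm (Fin k)) : MeasurableSet (patternEvent π) := by
  simp only [patternEvent, StrictMono, Set.ofPred_exists, Set.ofPred_and, Set.ofPred_forall]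
  refine .iUnion fun σ => .inter ?_ ?_
  · exact .iInter fun i => .iInter fun j => .iInter fun _ =>
      measurableSet_lt (by fun_prop) (by fun_prop)
  · exact .iInter fun i => .iInter fun j =>
      (measurableSet_lt (by fun_prop) (by fun_prop)).iff (.const _)

lemma integrable_patternCount (S : Finset (Equiv.Perm (Fin k))) (Λ : Measure (Fin k → ℝ × ℝ))
    [IsFiniteMeasure Λ] : Integrable (patternCount S) Λ :=
  integrable_finsetSum _ fun π _ =>
    (integrable_const 1).indicator (measurableSet_patternEvent π)

end Pattern

section ProductMeasure

variable {ι : Type*} [Fintype ι]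

lemma measure_pi_withDensity {X : ι → Type*} [∀ i, MeasurableSpace (X i)]
    (μ : ∀ i, Measure (X i)) [∀ i, IsProbabilityMeasure (μ i)] {f : ∀ i, X i → ℝ≥0∞}
    (hf : ∀ i, Measurable (f i)) [∀ i, SigmaFinite ((μ i).withDensity (f i))] :
    Measure.pi (fun i => (μ i).withDensity (f i)) =
      (Measure.pi μ).withDensity fun x => ∏ i, f i (x i) := by
  refine Measure.pi_eq fun s hs => ?_
  have indicator_prod (x : ∀ i, X i) : (Set.univ.pi s).indicator (fun x => ∏ i, f i (x i)) x =
      ∏ i, (s i).indicator (f i) (x i) := by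
    by_cases hx : x ∈ Set.univ.pi s
    · rw [Set.indicator_of_mem hx]
      exact Finset.prod_congr rfl fun i _ => (Set.indicator_of_mem (hx i trivial) _).symm
    · obtain ⟨i, hi⟩ : ∃ i, x i ∉ s i := by simpa using hx
      rw [Set.indicator_of_notMem hx,
        Finset.prod_eq_zero (Finset.mem_univ i) (Set.indicator_of_notMem hi _)]
  have indep : ProbabilityTheory.iIndepFun (fun i x => (s i).indicator (f i) (x i))
      (Measure.pi μ) :=
    ProbabilityTheory.iIndepFun_pi fun i => ((hf i).indicator (hs i)).aemeasurable
  rw [withDensity_apply _ (.univ_pi hs), ← lintegral_indicator (.univ_pi hs)]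
  simp only [indicator_prod]
  rw [ProbabilityTheory.lintegral_prod_eq_prod_lintegral_of_indepFun _ _ indep
    fun i => ((hf i).indicator (hs i)).comp (measurable_pi_apply i)]
  refine Finset.prod_congr rfl fun i _ => ?_
  rw [withDensity_apply _ (hs i), ← lintegral_indicator (hs i)]
  exact (measurePreserving_eval μ i).lintegral_comp ((hf i).indicator (hs i))

lemma measureReal_withDensity_ofReal {Ω : Type*} [MeasurableSpace Ω] {μ : Measure Ω} {f : Ω → ℝ}
    (hf : Measurable f) (hf0 : 0 ≤ f) {s : Set Ω} (hs : MeasurableSet s) :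
    (μ.withDensity fun x => ENNReal.ofReal (f x)).real s = ∫ x in s, f x ∂μ := by
  rw [measureReal_def, withDensity_apply _ hs,
    integral_eq_lintegral_of_nonneg_ae (.of_forall hf0) hf.aestronglyMeasurable]

lemma ae_eval_ne_eval {X : Type*} [MeasurableSpace X] [MeasurableEq X] (α : Measure X)
    [IsProbabilityMeasure α] [NullSingletonClass α] {i j : ι} (hij : i ≠ j) :
    ∀ᵐ x ∂Measure.pi fun _ : ι => α, x i ≠ x j := by
  have indep : ProbabilityTheory.IndepFun (Function.eval i) (Function.eval j)
      (Measure.pi fun _ : ι => α) :=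
    (ProbabilityTheory.iIndepFun_pi (X := fun _ => id) fun _ => aemeasurable_id).indepFun hij
  have joint_law : (Measure.pi fun _ : ι => α).map (fun x => (x i, x j)) = α.prod α := by
    rw [(ProbabilityTheory.indepFun_iff_map_prod_eq_prod_map_map
      (measurable_pi_apply i).aemeasurable (measurable_pi_apply j).aemeasurable).1 indep,
      (measurePreserving_eval _ i).map_eq, (measurePreserving_eval _ j).map_eq]
  have off_diagonal : ∀ᵐ y ∂α.prod α, y.1 ≠ y.2 :=
    (Measure.ae_prod_iff_ae_ae measurableSet_diagonal.compl).2 <|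
      .of_forall fun x => by simp [ae_iff]
  rw [← joint_law] at off_diagonal
  exact ae_of_ae_map (f := fun x : ι → X => (x i, x j)) (by fun_prop) off_diagonal

lemma ae_injective_pi {X : Type*} [MeasurableSpace X] [MeasurableEq X] (α : Measure X)
    [IsProbabilityMeasure α] [NullSingletonClass α] :
    ∀ᵐ x ∂Measure.pi fun _ : ι => α, Function.Injective x := by
  have ae_pairwise_ne : ∀ᵐ x ∂Measure.pi fun _ : ι => α, ∀ i j : ι, i ≠ j → x i ≠ x j := by
    simp only [ae_all_iff]
    exact fun i j => ae_eval_ne_eval α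
  filter_upwards [ae_pairwise_ne] with x hx i j
  exact not_imp_not.1 (hx i j)

lemma measurePreserving_permuteSnd {k : ℕ} (α β : Measure ℝ) [SigmaFinite α] [SigmaFinite β]
    (τ : Equiv.Perm (Fin k)) :
    MeasurePreserving (permuteSnd τ) (Measure.pi fun _ : Fin k => α.prod β)
      (Measure.pi fun _ : Fin k => α.prod β) := by
  have split := measurePreserving_arrowProdEquivProdArrow ℝ ℝ (Fin k) (fun _ => α) (fun _ => β)
  have permute := measurePreserving_arrowCongr' (fun _ : Fin k => β) (fun _ : Fin k => β) τ.symm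
    (.refl ℝ) fun _ => .id β
  exact (split.symm.comp ((MeasurePreserving.id _).prod permute)).comp split

end ProductMeasure

section Gradient

lemma hasDerivAt_sum_pow_card_mul {ι : Type*} [Fintype ι] (a : Finset ι → ℝ) :
    HasDerivAt (fun t : ℝ => ∑ T, t ^ T.card * a T) (∑ i, a {i}) 0 := by
  have deriv_term (T : Finset ι) :
      HasDerivAt (fun t : ℝ => t ^ T.card * a T) (if T.card = 1 then a T else 0) 0 := by
    have monomial := (hasDerivAt_pow T.card (0 : ℝ)).mul_const (a T)
    suffices T.card * (0 : ℝ) ^ (T.card - 1) * a T = if T.card = 1 then a T else 0 from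
      this ▸ monomial
    rcases lt_trichotomy T.card 1 with h | h | h
    · simp [Nat.lt_one_iff.1 h]
    · simp [h]
    · simp [h.ne', zero_pow (Nat.sub_ne_zero_of_lt h)]
  have sum_singletons : ∑ i, a {i} = ∑ T, if T.card = 1 then a T else 0 := by
    rw [← Finset.sum_filter, ← Finset.powerset_univ, ← Finset.powersetCard_eq_filter,
      Finset.powersetCard_one, Finset.sum_map]
    rfl
  rw [sum_singletons]
  exact .fun_sum fun T _ => deriv_term T

lemma hasDerivAt_integral_mul_prod_one_add {Ω ι : Type*} [MeasurableSpace Ω] [Fintype ι]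
    {μ : Measure Ω} {F : Ω → ℝ} {u : ι → Ω → ℝ} {M : ℝ} (hF : Integrable F μ)
    (hu : ∀ i, AEStronglyMeasurable (u i) μ) (hM : ∀ i ω, |u i ω| ≤ M) :
    HasDerivAt (fun t : ℝ => ∫ ω, F ω * ∏ i, (1 + t * u i ω) ∂μ) (∑ i, ∫ ω, F ω * u i ω ∂μ) 0 := by
  have integrable_term (T : Finset ι) : Integrable (fun ω => F ω * ∏ i ∈ T, u i ω) μ := by
    refine hF.mul_bdd (c := ∏ _i ∈ T, M) (T.aestronglyMeasurable_fun_prod fun i _ => hu i) <|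
      .of_forall fun ω => ?_
    rw [Real.norm_eq_abs, Finset.abs_prod]
    exact Finset.prod_le_prod (fun i _ => abs_nonneg _) fun i _ => hM i ω
  have expand (t : ℝ) : ∫ ω, F ω * ∏ i, (1 + t * u i ω) ∂μ =
      ∑ T : Finset ι, t ^ T.card * ∫ ω, F ω * ∏ i ∈ T, u i ω ∂μ := by
    simp only [Finset.prod_one_add, Finset.powerset_univ, Finset.prod_mul_distrib,
      Finset.prod_const, Finset.mul_sum, mul_left_comm (F _)]
    rw [integral_finsetSum _ fun T _ => (integrable_term T).const_mul _]
    simp only [integral_const_mul]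
  simp only [expand]
  simpa only [Finset.prod_singleton] using
    hasDerivAt_sum_pow_card_mul fun T : Finset ι => ∫ ω, F ω * ∏ i ∈ T, u i ω ∂μ

variable {k : ℕ} {S : Finset (Equiv.Perm (Fin k))} {α β : Measure ℝ}
  [IsProbabilityMeasure α] [IsProbabilityMeasure β]

lemma permutonDensity_withDensity (π : Equiv.Perm (Fin k)) {μ : Measure (ℝ × ℝ)}
    [IsProbabilityMeasure μ] {f : ℝ × ℝ → ℝ} (hf : Measurable f) (hf0 : 0 ≤ f)
    (hfμ : Integrable f μ) :
    PermutonDensity π (μ.withDensity fun z => ENNReal.ofReal (f z)) =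
      ∫ p, (patternEvent π).indicator 1 p * ∏ i, f (p i) ∂Measure.pi fun _ : Fin k => μ := by
  have : IsFiniteMeasure (μ.withDensity fun z => ENNReal.ofReal (f z)) :=
    isFiniteMeasure_withDensity_ofReal hfμ.2
  have pi_eq : (Measure.pi fun _ : Fin k => μ.withDensity fun z => ENNReal.ofReal (f z)) =
      (Measure.pi fun _ : Fin k => μ).withDensity fun p => ENNReal.ofReal (∏ i, f (p i)) := by
    rw [measure_pi_withDensity _ fun _ => hf.ennreal_ofReal]
    simp only [ENNReal.ofReal_prod_of_nonneg fun _ _ => hf0 _]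
  have hprod : Measurable fun p : Fin k → ℝ × ℝ => ∏ i, f (p i) :=
    Finset.measurable_fun_prod _ fun i _ => hf.comp (measurable_pi_apply i)
  calc PermutonDensity π (μ.withDensity fun z => ENNReal.ofReal (f z))
      = ∫ p in patternEvent π, ∏ i, f (p i) ∂Measure.pi fun _ : Fin k => μ := by
        rw [← measureReal_withDensity_ofReal hprod
          (fun p => Finset.prod_nonneg fun i _ => hf0 _) (measurableSet_patternEvent π), ← pi_eq]
        rfl
    _ = ∫ p, (patternEvent π).indicator 1 p * ∏ i, f (p i) ∂Measure.pi fun _ : Fin k => μ := by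
        rw [← integral_indicator (measurableSet_patternEvent π)]
        congr with p
        by_cases hp : p ∈ patternEvent π <;> simp [hp]

lemma sum_permutonDensity_withDensity (S : Finset (Equiv.Perm (Fin k))) {μ : Measure (ℝ × ℝ)}
    [IsProbabilityMeasure μ] {f : ℝ × ℝ → ℝ} (hf : Measurable f) (hf0 : 0 ≤ f)
    (hfμ : Integrable f μ) :
    ∑ π ∈ S, PermutonDensity π (μ.withDensity fun z => ENNReal.ofReal (f z)) =
      ∫ p, patternCount S p * ∏ i, f (p i) ∂Measure.pi fun _ : Fin k => μ := by
  simp only [permutonDensity_withDensity _ hf hf0 hfμ, patternCount, Finset.sum_mul]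
  refine (integral_finsetSum _ fun π _ => ?_).symm
  exact (Integrable.fintype_prod fun _ => hfμ).bdd_mul (c := 1)
    (measurable_one.indicator (measurableSet_patternEvent π)).aestronglyMeasurable
    (.of_forall fun p => by by_cases hp : p ∈ patternEvent π <;> simp [hp])

lemma ae_sum_patternCount_permuteSnd [NullSingletonClass α] [NullSingletonClass β] {c : ℕ}
    (hC : ∀ i j, (S.filter fun π => π j = i).card = c) (m : Fin k) :
    ∀ᵐ p ∂Measure.pi fun _ : Fin k => α.prod β,
      ∑ τ with τ m = m, patternCount S (permuteSnd τ p) = c := by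
  have split := measurePreserving_arrowProdEquivProdArrow ℝ ℝ (Fin k) (fun _ => α) (fun _ => β)
  filter_upwards [
    (Measure.quasiMeasurePreserving_fst.comp split.quasiMeasurePreserving).ae (ae_injective_pi α),
    (Measure.quasiMeasurePreserving_snd.comp split.quasiMeasurePreserving).ae (ae_injective_pi β)]
    with p hx hy
  obtain ⟨σ, hσ⟩ := exists_strictMono_comp_perm hx
  obtain ⟨ρ, hρ⟩ := exists_strictMono_comp_perm hy
  rw [sum_patternCount_permuteSnd hσ hρ, hC]

lemma integral_patternCount_mul_eval [NullSingletonClass α] [NullSingletonClass β] {c : ℕ}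
    (hC : ∀ i j, (S.filter fun π => π j = i).card = c) {g : ℝ × ℝ → ℝ} (hg : Measurable g) {M : ℝ}
    (hM : ∀ z, |g z| ≤ M) (m : Fin k) :
    (Finset.univ.filter fun τ : Equiv.Perm (Fin k) => τ m = m).card *
      ∫ p, patternCount S p * g (p m) ∂(Measure.pi fun _ : Fin k => α.prod β) =
        c * ∫ z, g z ∂α.prod β := by
  set Λ := Measure.pi fun _ : Fin k => α.prod β
  set R := Finset.univ.filter fun τ : Equiv.Perm (Fin k) => τ m = m
  have hg_eval : Measurable fun p : Fin k → ℝ × ℝ => g (p m) := hg.comp (measurable_pi_apply m)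
  have hH : Integrable (fun p => patternCount S p * g (p m)) Λ :=
    (integrable_patternCount S Λ).mul_bdd hg_eval.aestronglyMeasurable (.of_forall fun p => hM _)
  have comp_permuteSnd {τ : Equiv.Perm (Fin k)} (hτ : τ ∈ R) :
      (fun p => patternCount S p * g (p m)) ∘ permuteSnd τ =
        fun p => patternCount S (permuteSnd τ p) * g (p m) := by
    funext p
    simp [permuteSnd, (Finset.mem_filter.1 hτ).2]
  calc (R.card : ℝ) * ∫ p, patternCount S p * g (p m) ∂Λ
      = ∑ τ ∈ R, ∫ p, patternCount S (permuteSnd τ p) * g (p m) ∂Λ := by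
        rw [← nsmul_eq_mul, ← Finset.sum_const]
        refine Finset.sum_congr rfl fun τ hτ => ?_
        rw [← comp_permuteSnd hτ]
        have hτΛ : MeasurePreserving (permuteSnd τ) Λ Λ := measurePreserving_permuteSnd α β τ
        have change_of_variables := integral_map hτΛ.aemeasurable
          (by rw [hτΛ.map_eq]; exact hH.aestronglyMeasurable)
        rwa [hτΛ.map_eq] at change_of_variables
    _ = ∫ p, ∑ τ ∈ R, patternCount S (permuteSnd τ p) * g (p m) ∂Λ :=
        (integral_finsetSum _ fun τ hτ => comp_permuteSnd hτ ▸
          (measurePreserving_permuteSnd α β τ).integrable_comp_of_integrable hH).symm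
    _ = ∫ p, c * g (p m) ∂Λ := by
        refine integral_congr_ae ?_
        filter_upwards [ae_sum_patternCount_permuteSnd hC m] with p hp
        rw [← Finset.sum_mul, hp]
    _ = c * ∫ z, g z ∂α.prod β := by
        rw [integral_const_mul, integral_comp_eval hg.aestronglyMeasurable]

theorem hasDerivAt_sum_permutonDensity_withDensity [NullSingletonClass α] [NullSingletonClass β]
    {c : ℕ} (hC : ∀ i j, (S.filter fun π => π j = i).card = c) {g : ℝ × ℝ → ℝ}
    (hg : Measurable g) {M : ℝ} (hM : ∀ z, |g z| ≤ M) (hg0 : ∫ z, g z ∂α.prod β = 0) :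
    HasDerivAt (fun t : ℝ => ∑ π ∈ S, PermutonDensity π
      ((α.prod β).withDensity fun z => ENNReal.ofReal (1 + t * g z))) 0 0 := by
  have linear_coeff (m : Fin k) :
      ∫ p, patternCount S p * g (p m) ∂(Measure.pi fun _ : Fin k => α.prod β) = 0 := by
    have h := integral_patternCount_mul_eval (α := α) (β := β) hC hg hM m
    rw [hg0, mul_zero] at h
    refine (mul_eq_zero.1 h).resolve_left ?_
    exact Nat.cast_ne_zero.2 (Finset.card_ne_zero_of_mem (a := 1) (by simp))
  have taylor := hasDerivAt_integral_mul_prod_one_add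
    (integrable_patternCount S (Measure.pi fun _ : Fin k => α.prod β))
    (fun i => (hg.comp (measurable_pi_apply i)).aestronglyMeasurable) fun i p => hM (p i)
  simp only [Function.comp_apply, linear_coeff, Finset.sum_const_zero] at taylor
  refine taylor.congr_of_eventuallyEq ?_
  have small : ∀ᶠ t : ℝ in nhds 0, |t| * M < 1 := by
    have : Continuous fun t : ℝ => |t| * M := by fun_prop
    exact this.continuousAt.eventually_lt_const (by simp)
  have hgμ : Integrable g (α.prod β) := .of_bound hg.aestronglyMeasurable M (.of_forall hM)
  filter_upwards [small] with t ht
  have hb (z : ℝ × ℝ) : |t * g z| ≤ 1 := by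
    rw [abs_mul]
    exact (mul_le_mul_of_nonneg_left (hM z) (abs_nonneg t)).trans ht.le
  exact sum_permutonDensity_withDensity S ((hg.const_mul t).const_add 1)
    (fun z => neg_le_iff_add_nonneg'.1 (abs_le.1 (hb z)).1)
    ((integrable_const 1).add (hgμ.const_mul t))

end Gradient

section StepPermuton

variable {n : ℕ}

lemma withDensity_restrict_iUnion_eq_sum {ι X : Type*} [Fintype ι] [MeasurableSpace X]
    {μ : Measure X} {s : ι → Set X} (hs : ∀ i, MeasurableSet (s i))
    (hd : Pairwise (Function.onFun Disjoint s)) {f : X → ℝ≥0∞} {c : ι → ℝ≥0∞}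
    (hf : ∀ i, ∀ x ∈ s i, f x = c i) :
    (μ.restrict (⋃ i, s i)).withDensity f = ∑ i, c i • μ.restrict (s i) := by
  rw [Measure.restrict_iUnion hd hs, withDensity_sum, Measure.sum_fintype]
  refine Finset.sum_congr rfl fun i _ => ?_
  rw [withDensity_congr_ae (ae_restrict_of_forall_mem (hs i) (hf i)), withDensity_const]

/-- The half-open cells of the `n × n` grid on the unit square, on which the density of a step
permuton is constant. -/
def gridCell (p : Fin n × Fin n) : Set (ℝ × ℝ) :=
  Set.Ico ((p.1 : ℝ) / n) ((p.1 + 1) / n) ×ˢ Set.Ico ((p.2 : ℝ) / n) ((p.2 + 1) / n)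

/-- The step function with value `n * A i j` on the grid cell `(i, j)`, the signed density of
`stepPermuton A`. -/
noncomputable def stepDensity (A : Matrix (Fin n) (Fin n) ℝ) (z : ℝ × ℝ) : ℝ :=
  ∑ p, (gridCell p).indicator (fun _ => A p.1 p.2 * n) z

lemma measurableSet_gridCell (p : Fin n × Fin n) : MeasurableSet (gridCell p) :=
  measurableSet_Ico.prod measurableSet_Ico

lemma measurable_stepDensity (A : Matrix (Fin n) (Fin n) ℝ) : Measurable (stepDensity A) :=
  Finset.measurable_fun_sum _ fun p _ => measurable_const.indicator (measurableSet_gridCell p)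

lemma abs_stepDensity_le (A : Matrix (Fin n) (Fin n) ℝ) (z : ℝ × ℝ) :
    |stepDensity A z| ≤ ∑ p : Fin n × Fin n, |A p.1 p.2 * n| :=
  (Finset.abs_sum_le_sum_abs _ _).trans <| Finset.sum_le_sum fun p _ =>
    norm_indicator_le_norm_self (fun _ => A p.1 p.2 * n) z

variable [NeZero n]

lemma mem_Ico_div_iff {x : ℝ} {a : ℕ} :
    x ∈ Set.Ico ((a : ℝ) / n) ((a + 1) / n) ↔ 0 ≤ x ∧ ⌊x * n⌋₊ = a := by
  have hn : (0 : ℝ) < n := Nat.cast_pos.2 (NeZero.pos n)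
  have floor_iff (hx : 0 ≤ x) := Nat.floor_eq_iff (n := a) (mul_nonneg hx hn.le)
  rw [Set.mem_Ico, div_le_iff₀ hn, lt_div_iff₀ hn]
  refine ⟨fun h => ?_, fun h => (floor_iff h.1).1 h.2⟩
  have hx : 0 ≤ x := nonneg_of_mul_nonneg_left (a.cast_nonneg.trans h.1) hn
  exact ⟨hx, (floor_iff hx).2 h⟩

lemma pairwise_disjoint_gridCell :
    Pairwise (Function.onFun Disjoint (gridCell : Fin n × Fin n → Set (ℝ × ℝ))) := by
  intro p q hpq
  refine Set.disjoint_left.2 fun z hzp hzq => hpq ?_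
  have hp := hzp.imp mem_Ico_div_iff.1 mem_Ico_div_iff.1
  have hq := hzq.imp mem_Ico_div_iff.1 mem_Ico_div_iff.1
  exact Prod.ext (Fin.ext (hp.1.2.symm.trans hq.1.2)) (Fin.ext (hp.2.2.symm.trans hq.2.2))

lemma iUnion_Ico_div : ⋃ a : Fin n, Set.Ico ((a : ℝ) / n) ((a + 1) / n) = Set.Ico 0 1 := by
  have hn : (0 : ℝ) < n := Nat.cast_pos.2 (NeZero.pos n)
  ext x
  rw [Set.mem_iUnion, Set.mem_Ico]
  simp only [mem_Ico_div_iff]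
  refine ⟨fun ⟨a, hx, ha⟩ => ⟨hx, ?_⟩, fun ⟨hx, hx1⟩ => ?_⟩
  · have : x * n < n := (Nat.floor_lt (mul_nonneg hx hn.le)).1 (ha ▸ a.2)
    exact (mul_lt_iff_lt_one_left hn).1 this
  · have : x * n < n := (mul_lt_iff_lt_one_left hn).2 hx1
    exact ⟨⟨_, (Nat.floor_lt (mul_nonneg hx hn.le)).2 this⟩, hx, rfl⟩

lemma iUnion_gridCell :
    ⋃ p : Fin n × Fin n, gridCell p = Set.Ico (0 : ℝ) 1 ×ˢ Set.Ico (0 : ℝ) 1 := by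
  rw [← iUnion_Ico_div (n := n), ← Set.iUnion_prod]
  rfl

lemma stepDensity_of_mem (A : Matrix (Fin n) (Fin n) ℝ) {p : Fin n × Fin n} {z : ℝ × ℝ}
    (hz : z ∈ gridCell p) : stepDensity A z = A p.1 p.2 * n := by
  rw [stepDensity, Finset.sum_eq_single p, Set.indicator_of_mem hz]
  · exact fun q _ hqp => Set.indicator_of_notMem
      (Set.disjoint_right.1 (pairwise_disjoint_gridCell hqp) hz) _
  · simp

lemma stepPermuton_one_div_add_mul (D : Matrix (Fin n) (Fin n) ℝ) (t : ℝ) :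
    stepPermuton (fun a b => 1 / n + t * D a b) =
      ((volume.restrict (Set.Ico 0 1)).prod (volume.restrict (Set.Ico 0 1))).withDensity
        fun z => ENNReal.ofReal (1 + t * stepDensity D z) := by
  have hn : (n : ℝ) ≠ 0 := NeZero.ne _
  rw [Measure.prod_restrict, ← Measure.volume_eq_prod, ← iUnion_gridCell (n := n),
    withDensity_restrict_iUnion_eq_sum measurableSet_gridCell pairwise_disjoint_gridCell
      (c := fun p => ENNReal.ofReal ((1 / n + t * D p.1 p.2) * n)), Fintype.sum_prod_type]
  · rfl
  · intro p z hz
    rw [stepDensity_of_mem D hz, add_mul, one_div_mul_cancel hn, mul_assoc]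

lemma measureReal_gridCell (p : Fin n × Fin n) :
    ((volume.restrict (Set.Ico 0 1)).prod (volume.restrict (Set.Ico 0 1))).real (gridCell p) =
      1 / n ^ 2 := by
  have subset : gridCell p ⊆ Set.Ico (0 : ℝ) 1 ×ˢ Set.Ico (0 : ℝ) 1 :=
    iUnion_gridCell (n := n) ▸ Set.subset_iUnion gridCell p
  have side (a : ℝ) : max ((a + 1) / n - a / n) 0 = 1 / n := by
    rw [← sub_div, add_sub_cancel_left, max_eq_left (by positivity)]
  rw [Measure.prod_restrict, measureReal_restrict_apply (measurableSet_gridCell p),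
    Set.inter_eq_left.2 subset, gridCell, measureReal_prod_prod, Real.volume_real_Ico,
    Real.volume_real_Ico, side, side]
  ring

lemma integral_stepDensity (A : Matrix (Fin n) (Fin n) ℝ) :
    ∫ z, stepDensity A z ∂(volume.restrict (Set.Ico 0 1)).prod (volume.restrict (Set.Ico 0 1)) =
      (∑ a, ∑ b, A a b) / n := by
  have hn : (n : ℝ) ≠ 0 := NeZero.ne _
  simp only [stepDensity]
  rw [integral_finsetSum _ fun p _ => (integrable_const _).indicator (measurableSet_gridCell p)]
  simp only [integral_indicator_const _ (measurableSet_gridCell _), measureReal_gridCell,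
    smul_eq_mul, Fintype.sum_prod_type, Finset.sum_div]
  refine Finset.sum_congr rfl fun a _ => Finset.sum_congr rfl fun b _ => ?_
  field_simp

theorem statement_13_general {k : ℕ} (S : Finset (Equiv.Perm (Fin k))) {c : ℕ}
    (hC : ∀ i j, (S.filter fun π => π j = i).card = c) (D : Matrix (Fin n) (Fin n) ℝ)
    (hD : ∑ a, ∑ b, D a b = 0) :
    HasDerivAt (fun t : ℝ => ∑ π ∈ S,
      PermutonDensity π (stepPermuton fun a b => 1 / n + t * D a b)) 0 0 := by
  have : IsProbabilityMeasure (volume.restrict (Set.Ico (0 : ℝ) 1)) := ⟨by simp⟩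
  simp only [stepPermuton_one_div_add_mul]
  refine hasDerivAt_sum_permutonDensity_withDensity hC (measurable_stepDensity D)
    (abs_stepDensity_le D) ?_
  rw [integral_stepDensity, hD, zero_div]

end StepPermuton

section Bmat

variable {n : ℕ}

lemma pertMatrix_single (p : Fin (n - 1) × Fin (n - 1)) (t : ℝ) :
    pertMatrix n (Pi.single p t) = fun a b => 1 / n + t * Bmat n p.1 p.2 a b := by
  funext a b
  rw [pertMatrix, Fintype.sum_eq_single p fun q hq => by rw [Pi.single_eq_of_ne hq, zero_mul],
    Pi.single_eq_same]

lemma Bmat_eq_mul (p q : Fin (n - 1)) (a b : Fin n) :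
    Bmat n p q a b = ((if (a : ℕ) = p then 1 else 0) - if (a : ℕ) = p + 1 then 1 else 0) *
      ((if (b : ℕ) = q then 1 else 0) - if (b : ℕ) = q + 1 then 1 else 0) := by
  simp only [Bmat, ite_and]
  split_ifs <;> norm_num

lemma sum_ite_val_eq {m : ℕ} (hm : m < n) :
    ∑ b : Fin n, (if (b : ℕ) = m then 1 else 0 : ℝ) = 1 := by
  rw [Fintype.sum_eq_single ⟨m, hm⟩ fun b hb => if_neg (Fin.val_ne_of_ne hb), if_pos rfl]

lemma sum_Bmat (p q : Fin (n - 1)) (a : Fin n) : ∑ b, Bmat n p q a b = 0 := by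
  simp only [Bmat_eq_mul, ← Finset.mul_sum, Finset.sum_sub_distrib]
  rw [sum_ite_val_eq (by lia), sum_ite_val_eq (by lia), sub_self, mul_zero]

end Bmat

theorem statement_13 {n : ℕ} (hn : 2 ≤ n) (S : Finset (Equiv.Perm (Fin 4)))
    (hC : ∃ c : ℕ, ∀ i j : Fin 4, coverMatrix S i j = c) :
    ∀ i j : Fin (n - 1), deriv (fun t : ℝ => hSN n S (Pi.single (i, j) t)) 0 = 0 := by
  obtain ⟨c, hC⟩ := hC
  intro i j
  have : NeZero n := ⟨by lia⟩
  simp only [hSN, pertMatrix_single]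
  exact (statement_13_general S (c := c) (fun i j => by rw [← hC i j, coverMatrix]) (Bmat n i j)
    (by simp only [sum_Bmat, Finset.sum_const_zero])).deriv
end

section
/- Let S be a set of 4-permutations. If there exist permutons μ_1 and μ_2 such that Σ_{π∈S} d(π,μ_1) < |S|/24 and Σ_{π∈S} d(π,μ_2) > |S|/24, then there exists a permuton μ that is not the uniform permuton and satisfies Σ_{π∈S} d(π,μ) = |S|/24. -/
open MeasureTheory Filter

/-!
Start at `μ₁` or `μ₂`, chosen so that the target value lies between its density sum and
that of the diagonal permuton, and move along the segment towards the diagonal permuton. Pattern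
densities are polynomials in the weights of a mixture, so the target value is attained on the way,
and not at the starting point. Every later point of the segment charges the diagonal of the square,
which is a null set for the uniform permuton.
-/

open scoped NNReal

section ProductMeasures

variable {ι : Type*} [Fintype ι] {κ : ι → Type*} [∀ i, Fintype (κ i)] {α : ι → Type*}
  [∀ i, MeasurableSpace (α i)] (μ : ∀ i, κ i → Measure (α i)) [∀ i j, IsFiniteMeasure (μ i j)]

lemma pi_sum_smul_measure [DecidableEq ι] (c : ∀ i, κ i → ℝ≥0) :
    Measure.pi (fun i => ∑ j, c i j • μ i j) =
      ∑ s : ∀ i, κ i, (∏ i, c i (s i)) • Measure.pi fun i => μ i (s i) := by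
  refine Measure.pi_eq fun A _ => ?_
  simp only [Measure.finsetSum_apply, Measure.smul_apply, ENNReal.smul_def, smul_eq_mul,
    Measure.pi_pi, ENNReal.ofNNReal_finsetProd, ← Finset.prod_mul_distrib]
  rw [Finset.prod_univ_sum, Fintype.piFinset_univ]

lemma continuous_measureReal_pi_sum_smul (A : Set (∀ i, α i)) :
    Continuous fun c : ∀ i, κ i → ℝ≥0 => (Measure.pi fun i => ∑ j, c i j • μ i j).real A := by
  classical
  have measureReal_eq (c : ∀ i, κ i → ℝ≥0) :
      (Measure.pi fun i => ∑ j, c i j • μ i j).real A =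
        ∑ s : ∀ i, κ i, (∏ i, (c i (s i) : ℝ)) * (Measure.pi fun i => μ i (s i)).real A := by
    rw [pi_sum_smul_measure, measureReal_def, Measure.finsetSum_apply,
      ENNReal.toReal_sum fun _ _ => measure_ne_top _ _]
    simp only [← measureReal_def, measureReal_nnreal_smul_apply, NNReal.coe_prod]
  simp only [measureReal_eq]
  fun_prop

end ProductMeasures

lemma prod_diagonal_eq_zero {α : Type*} [MeasurableSpace α] [MeasurableEq α]
    (μ ν : Measure α) [SFinite ν] [NullSingletonClass ν] : μ.prod ν (Set.diagonal α) = 0 := by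
  have slice (x : α) : Prod.mk x ⁻¹' Set.diagonal α = {x} := by
    ext y
    simp [eq_comm]
  simp [Measure.prod_apply measurableSet_diagonal, slice]

lemma continuous_permutonDensity_sum_smul {κ : Type*} [Fintype κ] {k : ℕ}
    (π : Equiv.Perm (Fin k)) (μ : κ → Measure (ℝ × ℝ)) [∀ j, IsFiniteMeasure (μ j)] :
    Continuous fun c : κ → ℝ≥0 => PermutonDensity π (∑ j, c j • μ j) :=
  (continuous_measureReal_pi_sum_smul (fun _ : Fin k => μ) _).comp
    (continuous_pi fun _ => continuous_id)

lemma uIcc_sum_permutonDensity_subset_image_segment {k : ℕ} (w : Equiv.Perm (Fin k) → ℝ)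
    (μ ν : Measure (ℝ × ℝ)) [IsFiniteMeasure μ] [IsFiniteMeasure ν] :
    Set.uIcc (∑ π, w π * PermutonDensity π μ) (∑ π, w π * PermutonDensity π ν) ⊆
      (fun ρ => ∑ π, w π * PermutonDensity π ρ) '' segment ℝ≥0 μ ν := by
  have : ∀ j, IsFiniteMeasure (![μ, ν] j) := Fin.forall_fin_two.2 ⟨‹_›, ‹_›⟩
  have density_continuous (π : Equiv.Perm (Fin k)) :
      Continuous fun t : ℝ≥0 => PermutonDensity π ((1 - t) • μ + t • ν) := by
    have weights_continuous : Continuous fun t : ℝ≥0 => ![1 - t, t] := by fun_prop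
    simpa [Function.comp_def] using
      (continuous_permutonDensity_sum_smul π ![μ, ν]).comp weights_continuous
  have sum_continuous : Continuous fun t : ℝ≥0 =>
      ∑ π, w π * PermutonDensity π ((1 - t) • μ + t • ν) := by fun_prop
  intro c hc
  obtain ⟨t, ht, rfl⟩ : c ∈ (fun t : ℝ≥0 => ∑ π, w π * PermutonDensity π ((1 - t) • μ + t • ν)) ''
      Set.uIcc 0 1 :=
    intermediate_value_uIcc sum_continuous.continuousOn (by simpa using hc)
  have ht1 : t ≤ 1 := (Set.uIcc_of_le (zero_le_one (α := ℝ≥0)) ▸ ht).2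
  exact ⟨_, ⟨1 - t, t, zero_le, zero_le, tsub_add_cancel_of_le ht1, rfl⟩, rfl⟩

lemma convex_setOf_isPermuton : Convex ℝ≥0 {μ | IsPermuton μ} := by
  rintro μ ⟨hμ, hμx, hμy⟩ ν ⟨hν, hνx, hνy⟩ a b - - hab
  refine ⟨⟨by simpa using mod_cast hab⟩, fun x x' h₀ h h₁ => ?_, fun y y' h₀ h h₁ => ?_⟩
  · rw [Measure.add_apply, Measure.smul_apply, Measure.smul_apply, hμx x x' h₀ h h₁,
      hνx x x' h₀ h h₁, ← add_smul, hab, one_smul]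
  · rw [Measure.add_apply, Measure.smul_apply, Measure.smul_apply, hμy y y' h₀ h h₁,
      hνy y y' h₀ h h₁, ← add_smul, hab, one_smul]

/-- The diagonal permuton: the law of `(X, X)` for `X` uniform on `[0,1]`, i.e. the limit of the
identity permutations. It is the far end of the segments along which the target value is sought. -/
noncomputable def diagonalPermuton : Measure (ℝ × ℝ) :=
  (volume.restrict (Set.Icc (0 : ℝ) 1)).map fun x => (x, x)

lemma diagonalPermuton_prod {s t : Set ℝ} (hs : MeasurableSet s) (ht : MeasurableSet t) :
    diagonalPermuton (s ×ˢ t) = volume (s ∩ t ∩ Set.Icc 0 1) := by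
  rw [diagonalPermuton, Measure.map_apply (by fun_prop) (hs.prod ht), Set.mk_preimage_prod,
    Set.preimage_id', Set.preimage_id', Measure.restrict_apply (hs.inter ht)]

lemma isPermuton_diagonalPermuton : IsPermuton diagonalPermuton := by
  have volume_inter {x x' : ℝ} (h₀ : 0 ≤ x) (h₁ : x' ≤ 1) :
      volume (Set.Icc x x' ∩ Set.Icc 0 1) = ENNReal.ofReal (x' - x) := by
    rw [Set.inter_eq_left.2 (Set.Icc_subset_Icc h₀ h₁), Real.volume_Icc]
  refine ⟨⟨?_⟩, fun x x' h₀ _ h₁ => ?_, fun y y' h₀ _ h₁ => ?_⟩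
  · simp [← Set.univ_prod_univ, diagonalPermuton_prod]
  · rw [diagonalPermuton_prod measurableSet_Icc measurableSet_Icc, Set.inter_assoc, Set.inter_self,
      volume_inter h₀ h₁]
  · rw [diagonalPermuton_prod measurableSet_Icc measurableSet_Icc, Set.inter_right_comm,
      Set.inter_self, Set.inter_comm, volume_inter h₀ h₁]

lemma diagonalPermuton_diagonal_eq_one : diagonalPermuton (Set.diagonal ℝ) = 1 := by
  have preimage_diagonal : (fun x : ℝ => (x, x)) ⁻¹' Set.diagonal ℝ = Set.univ := by
    ext
    simp
  rw [diagonalPermuton, Measure.map_apply (by fun_prop) measurableSet_diagonal, preimage_diagonal]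
  simp

lemma uniformPermuton_diagonal_eq_zero : uniformPermuton (Set.diagonal ℝ) = 0 :=
  Measure.absolutelyContinuous_of_le Measure.restrict_le_self
    (prod_diagonal_eq_zero (volume : Measure ℝ) volume)

lemma add_smul_diagonalPermuton_ne_uniformPermuton (μ : Measure (ℝ × ℝ)) {b : ℝ≥0} (hb : b ≠ 0) :
    μ + b • diagonalPermuton ≠ uniformPermuton := by
  intro h
  have mass_diagonal := uniformPermuton_diagonal_eq_zero
  simp [← h, diagonalPermuton_diagonal_eq_one, hb] at mass_diagonal

lemma IsPermuton.exists_ne_uniformPermuton_sum_density_eq {k : ℕ} {w : Equiv.Perm (Fin k) → ℝ}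
    {μ : Measure (ℝ × ℝ)} (hμ : IsPermuton μ) {c : ℝ}
    (hne : ∑ π, w π * PermutonDensity π μ ≠ c)
    (hc : c ∈ Set.uIcc (∑ π, w π * PermutonDensity π μ)
      (∑ π, w π * PermutonDensity π diagonalPermuton)) :
    ∃ ρ, IsPermuton ρ ∧ ρ ≠ uniformPermuton ∧ ∑ π, w π * PermutonDensity π ρ = c := by
  have hδ := isPermuton_diagonalPermuton
  have := hμ.1
  have := hδ.1
  obtain ⟨ρ, hρ, hρc⟩ := uIcc_sum_permutonDensity_subset_image_segment w μ diagonalPermuton hc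
  have ρ_permuton : IsPermuton ρ := convex_setOf_isPermuton.segment_subset hμ hδ hρ
  obtain ⟨a, b, -, -, hab, rfl⟩ := hρ
  have hb : b ≠ 0 := by
    rintro rfl
    obtain rfl : a = 1 := by simpa using hab
    exact hne (by simpa using hρc)
  exact ⟨_, ρ_permuton, add_smul_diagonalPermuton_ne_uniformPermuton _ hb, hρc⟩

theorem statement_17_general {k : ℕ} (w : Equiv.Perm (Fin k) → ℝ) (c : ℝ)
    (μ₁ μ₂ : Measure (ℝ × ℝ)) (h₁ : IsPermuton μ₁) (h₂ : IsPermuton μ₂)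
    (hlt : ∑ π, w π * PermutonDensity π μ₁ < c)
    (hgt : c < ∑ π, w π * PermutonDensity π μ₂) :
    ∃ μ : Measure (ℝ × ℝ), IsPermuton μ ∧ μ ≠ uniformPermuton ∧
      ∑ π, w π * PermutonDensity π μ = c := by
  rcases le_total c (∑ π, w π * PermutonDensity π diagonalPermuton) with h | h
  · exact h₁.exists_ne_uniformPermuton_sum_density_eq hlt.ne (Set.mem_uIcc_of_le hlt.le h)
  · exact h₂.exists_ne_uniformPermuton_sum_density_eq hgt.ne' (Set.mem_uIcc_of_ge h hgt.le)

theorem statement_17 (S : Finset (Equiv.Perm (Fin 4)))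
    (μ₁ μ₂ : Measure (ℝ × ℝ)) (h₁ : IsPermuton μ₁) (h₂ : IsPermuton μ₂)
    (hlt : ∑ π ∈ S, PermutonDensity π μ₁ < (S.card : ℝ) / 24)
    (hgt : (S.card : ℝ) / 24 < ∑ π ∈ S, PermutonDensity π μ₂) :
    ∃ μ : Measure (ℝ × ℝ), IsPermuton μ ∧ μ ≠ uniformPermuton ∧
      ∑ π ∈ S, PermutonDensity π μ = (S.card : ℝ) / 24 := by
  simpa using statement_17_general (fun π => if π ∈ S then 1 else 0) (S.card / 24) μ₁ μ₂
    h₁ h₂ (by simpa using hlt) (by simpa using hgt)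
end
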